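/- Splitting for LBV: for all structures P and Q and every context C{ }, if C(P,Q) is provable in LBV, then there exist structures S₁ and S₂ such that (a) for every structure X there is a derivation in LBV with premise [X,S₁,S₂] and conclusion C{X}, and (b) [P,S₁] and [Q,S₂] are both provable in LBV. -/

import Mathlib

/-!
The deep-inference system LBV (the `BV`-free core system of the calculus of
structures of Guglielmi).  Structures are built from the unit `◦`, atoms `a`
and negated atoms `ā` by par `[P,Q]` and copar `(P,Q)`, and are identified
modulo the congruence generated by associativity, commutativity and the
unit laws `[P,◦]=P`, `(P,◦)=P`.  The rules `ai↓`, `s` (and the atomic cut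
`ai↑`) apply inside an arbitrary one-hole context and modulo the
equivalence.
-/

namespace LBV

/-- Structures: the unit `◦`, atoms, negated atoms, par `[P,Q]` and
copar `(P,Q)`. -/
inductive St : Type where
  | unit : St
  | pos  : ℕ → St
  | neg  : ℕ → St
  | par  : St → St → St
  | cop  : St → St → St
deriving DecidableEq

/-- Negation: `¬◦ = ◦`, `¬[P,Q] = (¬P,¬Q)`, `¬(P,Q) = [¬P,¬Q]`, `¬¬P = P`. -/
def St.negS : St → St
  | .unit => .unit
  | .pos a => .neg a
  | .neg a => .pos a
  | .par P Q => .cop P.negS Q.negS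
  | .cop P Q => .par P.negS Q.negS

/-- Atoms are the propositional symbols and their negations. -/
def St.isAtom : St → Prop
  | .pos _ => True
  | .neg _ => True
  | _ => False

/-- Syntactic equivalence of structures: the smallest congruence generated
by associativity and commutativity of par and copar and the unit laws
`[P,◦]=P` and `(P,◦)=P`. -/
inductive Equiv : St → St → Prop where
  | refl (P : St) : Equiv P P
  | symm {P Q : St} : Equiv P Q → Equiv Q P
  | trans {P Q R : St} : Equiv P Q → Equiv Q R → Equiv P R
  | parComm (P Q : St) : Equiv (.par P Q) (.par Q P)
  | copComm (P Q : St) : Equiv (.cop P Q) (.cop Q P)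
  | parAssoc (P Q R : St) : Equiv (.par (.par P Q) R) (.par P (.par Q R))
  | copAssoc (P Q R : St) : Equiv (.cop (.cop P Q) R) (.cop P (.cop Q R))
  | parUnit (P : St) : Equiv (.par P .unit) P
  | copUnit (P : St) : Equiv (.cop P .unit) P
  | parCongr {P P' Q Q' : St} :
      Equiv P P' → Equiv Q Q' → Equiv (.par P Q) (.par P' Q')
  | copCongr {P P' Q Q' : St} :
      Equiv P P' → Equiv Q Q' → Equiv (.cop P Q) (.cop P' Q')

/-- One-hole contexts. -/
inductive Ctx : Type where
  | hole : Ctx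
  | parL : Ctx → St → Ctx
  | parR : St → Ctx → Ctx
  | copL : Ctx → St → Ctx
  | copR : St → Ctx → Ctx

/-- Plugging a structure into the hole of a context. -/
def Ctx.fill : Ctx → St → St
  | .hole, P => P
  | .parL C Q, P => .par (C.fill P) Q
  | .parR Q C, P => .par Q (C.fill P)
  | .copL C Q, P => .cop (C.fill P) Q
  | .copR Q C, P => .cop Q (C.fill P)

/-- Names of the rules: interaction `ai↓`, co-interaction (atomic cut)
`ai↑`, and switch `s`. -/
inductive Rule : Type where
  | aiDown | aiUp | s
deriving DecidableEq

/-- The rules read at the root of a structure (premise on the left,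
conclusion on the right). -/
inductive RootStep : Rule → St → St → Prop where
  | aiDown (A : St) (h : A.isAtom) : RootStep .aiDown .unit (.par A A.negS)
  | aiUp (A : St) (h : A.isAtom) : RootStep .aiUp (.cop A A.negS) .unit
  | s (P Q R : St) : RootStep .s (.cop P (.par Q R)) (.par (.cop P Q) R)

/-- One inference step using a rule from the set `Rs`, applied inside an
arbitrary context and modulo the equivalence. -/
def Step (Rs : Set Rule) (P Q : St) : Prop :=
  ∃ r ∈ Rs, ∃ (C : Ctx) (P' Q' : St),
    RootStep r P' Q' ∧ Equiv P (C.fill P') ∧ Equiv (C.fill Q') Q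

/-- Derivations over an arbitrary step relation: a finite sequence of rule
instances from the premise to the conclusion (modulo the equivalence). -/
inductive Deriv (Stp : St → St → Prop) : St → St → Prop where
  | eqv {P Q : St} : Equiv P Q → Deriv Stp P Q
  | step {P Q R : St} : Stp P Q → Deriv Stp Q R → Deriv Stp P R

/-- The rules of the system LBV. -/
def LBVRules : Set Rule := {.aiDown, .s}

/-- Derivations in LBV. -/
def DerivLBV (P Q : St) : Prop := Deriv (Step LBVRules) P Q

/-- A proof of `Q` in LBV is a derivation from the unit `◦` to `Q`. -/
def ProofLBV (Q : St) : Prop := DerivLBV .unit Q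

end LBV

/-!
Up to equivalence, LBV is multiplicative linear logic with mix, the empty sequent and a single
self-dual unit.  The cut-free sequent calculus of that logic is sound for LBV, and complete without
any syntactic cut elimination: sequents form a phase space whose pole is the set of derivable
sequents, and by Okada's lemma the interpretation of `P` only contains contexts in which `P` is
derivable.  In a cut-free derivation of `(P,Q), R` the rule that introduces `(P,Q)` splits its
context, and the rules below it can be replayed on that context in LBV; this is splitting at the
root.  It yields context reduction: every provable `C{P}` has a killer `R` with `[P,R]` provable
and a derivation from `[X,R]` to `C{X}` for all `X`.  The theorem is context reduction for `(P,Q)`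
followed by splitting at the root for `[(P,Q),R]`.
-/

namespace LBV

/-! ### Structures modulo equivalence as a preordered algebra -/

section Derivations

variable {Rs : Set Rule} {P P' Q R : St}

theorem Step.of_equiv_left (e : Equiv P P') (h : Step Rs P' Q) : Step Rs P Q := by
  obtain ⟨r, hr, C, A, B, hAB, eP, eQ⟩ := h
  exact ⟨r, hr, C, A, B, hAB, e.trans eP, eQ⟩

theorem Step.par_right (h : Step Rs P Q) (R : St) : Step Rs (.par P R) (.par Q R) := by
  obtain ⟨r, hr, C, A, B, hAB, eP, eQ⟩ := h
  exact ⟨r, hr, .parL C R, A, B, hAB, .parCongr eP (.refl R), .parCongr eQ (.refl R)⟩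

theorem Step.cop_right (h : Step Rs P Q) (R : St) : Step Rs (.cop P R) (.cop Q R) := by
  obtain ⟨r, hr, C, A, B, hAB, eP, eQ⟩ := h
  exact ⟨r, hr, .copL C R, A, B, hAB, .copCongr eP (.refl R), .copCongr eQ (.refl R)⟩

theorem Step.of_rootStep {r : Rule} (hr : r ∈ Rs) (h : RootStep r P Q) : Step Rs P Q :=
  ⟨r, hr, .hole, P, Q, h, .refl P, .refl Q⟩

theorem Deriv.of_step {Stp : St → St → Prop} (h : Stp P Q) : Deriv Stp P Q :=
  .step h (.eqv (.refl Q))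

theorem Deriv.trans (h : Deriv (Step Rs) P Q) (h' : Deriv (Step Rs) Q R) :
    Deriv (Step Rs) P R := by
  induction h with
  | eqv e =>
    cases h' with
    | eqv e' => exact .eqv (e.trans e')
    | step s d => exact .step (s.of_equiv_left e) d
  | step s _ ih => exact .step s (ih h')

theorem Deriv.map {Stp : St → St → Prop} {f : St → St}
    (hequiv : ∀ {A B}, Equiv A B → Equiv (f A) (f B))
    (hstep : ∀ {A B}, Stp A B → Stp (f A) (f B)) (h : Deriv Stp P Q) :
    Deriv Stp (f P) (f Q) := by
  induction h with
  | eqv e => exact .eqv (hequiv e)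
  | step s _ ih => exact .step (hstep s) ih

end Derivations

instance stSetoid : Setoid St := ⟨Equiv, Equiv.refl, Equiv.symm, Equiv.trans⟩

/-- Structures modulo equivalence.  Par is written as addition and copar as multiplication, with
`◦` as both zero and one; `p ≤ q` is derivability in LBV of the conclusion `q` from the premise
`p`, so that `0 ≤ p` is provability of `p`. -/
abbrev StClass : Type := Quotient stSetoid

namespace StClass

instance : Zero StClass := ⟨⟦.unit⟧⟩

instance : Add StClass := ⟨Quotient.map₂ St.par fun _ _ h _ _ h' => Equiv.parCongr h h'⟩

instance : AddCommMonoid StClass where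
  add_assoc := by rintro ⟨P⟩ ⟨Q⟩ ⟨R⟩; exact Quotient.sound (Equiv.parAssoc P Q R)
  add_comm := by rintro ⟨P⟩ ⟨Q⟩; exact Quotient.sound (Equiv.parComm P Q)
  add_zero := by rintro ⟨P⟩; exact Quotient.sound (Equiv.parUnit P)
  zero_add := by
    rintro ⟨P⟩; exact Quotient.sound ((Equiv.parComm .unit P).trans (Equiv.parUnit P))
  nsmul := nsmulRec

instance : One StClass := ⟨⟦.unit⟧⟩

instance : Mul StClass := ⟨Quotient.map₂ St.cop fun _ _ h _ _ h' => Equiv.copCongr h h'⟩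

instance : CommMonoid StClass where
  mul_assoc := by rintro ⟨P⟩ ⟨Q⟩ ⟨R⟩; exact Quotient.sound (Equiv.copAssoc P Q R)
  mul_comm := by rintro ⟨P⟩ ⟨Q⟩; exact Quotient.sound (Equiv.copComm P Q)
  mul_one := by rintro ⟨P⟩; exact Quotient.sound (Equiv.copUnit P)
  one_mul := by
    rintro ⟨P⟩; exact Quotient.sound ((Equiv.copComm .unit P).trans (Equiv.copUnit P))

theorem mk_unit : (⟦.unit⟧ : StClass) = 0 := rfl

theorem mk_par (P Q : St) : (⟦.par P Q⟧ : StClass) = ⟦P⟧ + ⟦Q⟧ := rfl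

theorem mk_cop (P Q : St) : (⟦.cop P Q⟧ : StClass) = ⟦P⟧ * ⟦Q⟧ := rfl

theorem one_eq_zero : (1 : StClass) = 0 := rfl

instance : Preorder StClass where
  le := Quotient.lift₂ DerivLBV fun _ _ _ _ e e' => propext
    ⟨fun h => (Deriv.eqv e.symm).trans (Deriv.trans h (.eqv e')),
      fun h => (Deriv.eqv e).trans (Deriv.trans h (.eqv e'.symm))⟩
  le_refl := by rintro ⟨P⟩; exact Deriv.eqv (.refl P)
  le_trans := by rintro ⟨P⟩ ⟨Q⟩ ⟨R⟩; exact Deriv.trans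

theorem mk_le_mk {P Q : St} : (⟦P⟧ : StClass) ≤ ⟦Q⟧ ↔ DerivLBV P Q := Iff.rfl

instance : IsOrderedAddMonoid StClass where
  add_le_add_left := by
    rintro ⟨P⟩ ⟨Q⟩ h ⟨R⟩
    exact Deriv.map (fun e => .parCongr e (.refl R)) (fun s => s.par_right R) h

instance : IsOrderedMonoid StClass where
  mul_le_mul_left := by
    rintro ⟨P⟩ ⟨Q⟩ h ⟨R⟩
    exact Deriv.map (fun e => .copCongr e (.refl R)) (fun s => s.cop_right R) h

theorem mul_add_le (p q r : StClass) : p * (q + r) ≤ p * q + r := by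
  induction p, q, r using Quotient.inductionOn₃ with
  | h P Q R => exact Deriv.of_step (.of_rootStep (by simp [LBVRules]) (.s P Q R))

theorem add_mul_add_le (p q s t : StClass) : (p + s) * (q + t) ≤ p * q + (s + t) :=
  calc
    (p + s) * (q + t) ≤ (p + s) * q + t := mul_add_le _ _ _
    _ = q * (p + s) + t := by rw [mul_comm]
    _ ≤ q * p + s + t := by gcongr; exact mul_add_le q p s
    _ = p * q + (s + t) := by rw [mul_comm, add_assoc]

theorem add_le_mul_add_of_nonneg {q t : StClass} (h : 0 ≤ q + t) (p s : StClass) :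
    p + s ≤ p * q + (s + t) :=
  calc
    p + s = (p + s) * 0 := by rw [← one_eq_zero, mul_one]
    _ ≤ (p + s) * (q + t) := by gcongr
    _ ≤ p * q + (s + t) := add_mul_add_le p q s t

theorem zero_le_pos_add_neg (a : ℕ) : (0 : StClass) ≤ ⟦.pos a⟧ + ⟦.neg a⟧ :=
  Deriv.of_step (.of_rootStep (by simp [LBVRules]) (.aiDown (.pos a) trivial))

end StClass

open StClass

/-! ### Phase spaces -/

section PhaseSpace

open scoped Pointwise

variable {M : Type*} [AddCommMonoid M] (S : Set M)

/-- The orthogonal of `F` in the phase space `M` with pole `S`. -/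
def orth (F : Set M) : Set M := {x | ∀ y ∈ F, x + y ∈ S}

/-- The interpretation of copar in the phase space `M` with pole `S`: the biorthogonal of
`F + G`. -/
def tensor (F G : Set M) : Set M := orth S (orth S (F + G))

/-- The interpretation of par in the phase space `M` with pole `S`: the De Morgan dual of
`tensor`. -/
def parr (F G : Set M) : Set M := orth S (orth S F + orth S G)

variable {S} {F F' G G' : Set M} {x : M}

theorem mem_orth_add : x ∈ orth S (F + G) ↔ ∀ y ∈ F, ∀ z ∈ G, x + (y + z) ∈ S :=
  Set.forall_mem_image2

theorem orth_anti (h : F ⊆ G) : orth S G ⊆ orth S F := fun _ hx y hy => hx y (h hy)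

theorem subset_orth_orth (F : Set M) : F ⊆ orth S (orth S F) := fun x hx y hy => by
  rw [add_comm]
  exact hy x hx

theorem orth_orth_orth (F : Set M) : orth S (orth S (orth S F)) = orth S F :=
  (orth_anti (subset_orth_orth F)).antisymm (subset_orth_orth _)

theorem orth_add_orth_orth (F G : Set M) : orth S (F + orth S (orth S G)) = orth S (F + G) := by
  refine (orth_anti (Set.add_subset_add_left (subset_orth_orth G))).antisymm fun x hx => ?_
  rw [mem_orth_add] at hx ⊢
  intro y hy z hz
  have hxy : x + y ∈ orth S G := fun w hw => by
    rw [add_assoc]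
    exact hx y hy w hw
  rw [← add_assoc, add_comm]
  exact hz _ hxy

theorem orth_orth_add (F G : Set M) : orth S (orth S (orth S F) + G) = orth S (F + G) := by
  rw [add_comm, orth_add_orth_orth, add_comm]

theorem orth_zero : orth S 0 = S := by simp [orth]

theorem orth_tensor (F G : Set M) : orth S (tensor S F G) = orth S (F + G) := orth_orth_orth _

theorem tensor_mono (hF : F ⊆ F') (hG : G ⊆ G') : tensor S F G ⊆ tensor S F' G' :=
  orth_anti (orth_anti (Set.add_subset_add hF hG))

theorem parr_mono (hF : F ⊆ F') (hG : G ⊆ G') : parr S F G ⊆ parr S F' G' :=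
  orth_anti (Set.add_subset_add (orth_anti hF) (orth_anti hG))

theorem tensor_comm (F G : Set M) : tensor S F G = tensor S G F := by
  rw [tensor, add_comm, tensor]

theorem parr_comm (F G : Set M) : parr S F G = parr S G F := by
  rw [parr, add_comm, parr]

theorem tensor_assoc (F G H : Set M) :
    tensor S (tensor S F G) H = tensor S F (tensor S G H) := by
  simp only [tensor, orth_orth_add, orth_add_orth_orth, add_assoc]

theorem parr_assoc (F G H : Set M) : parr S (parr S F G) H = parr S F (parr S G H) := by
  simp only [parr, orth_orth_add, orth_add_orth_orth, add_assoc]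

theorem tensor_parr_subset (F G H : Set M) :
    tensor S F (parr S G H) ⊆ parr S (tensor S F G) H := by
  have add_parr_subset : F + parr S G H ⊆ orth S (orth S (F + G) + orth S H) := by
    rintro _ ⟨f, hf, x, hx, rfl⟩
    rw [parr, mem_orth_add] at hx
    rw [mem_orth_add]
    intro y hy z hz
    have hfy : f + y ∈ orth S G := fun g hg => by
      rw [add_comm f, add_assoc]
      exact mem_orth_add.1 hy f hf g hg
    rw [show f + x + (y + z) = x + (f + y + z) by abel]
    exact hx _ hfy z hz
  calc
    tensor S F (parr S G H) ⊆ orth S (orth S (orth S (orth S (F + G) + orth S H))) :=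
      orth_anti (orth_anti add_parr_subset)
    _ = parr S (tensor S F G) H := by rw [orth_orth_orth, parr, orth_tensor]

variable {S : AddSubmonoid M}

theorem orth_pole : orth (S : Set M) S = S := by
  refine Set.Subset.antisymm (fun x hx => ?_) fun x hx y hy => S.add_mem hx hy
  simpa using hx 0 S.zero_mem

theorem orth_add_pole (F : Set M) : orth (S : Set M) (F + S) = orth S F :=
  calc
    orth (S : Set M) (F + S) = orth S (F + orth S (orth S 0)) := by rw [orth_zero, orth_pole]
    _ = orth S F := by rw [orth_add_orth_orth, add_zero]

theorem pole_subset_parr_orth (F : Set M) : (S : Set M) ⊆ parr S F (orth S F) := by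
  intro x hx
  rw [parr, mem_orth_add]
  intro y hy z hz
  rw [add_comm y]
  exact S.add_mem hx (hz y hy)

end PhaseSpace

section Interpretation

variable {M : Type*} [AddCommMonoid M] (S : AddSubmonoid M) (v : ℕ → Set M)

/-- The interpretation of a structure in the phase space `M` with pole `S`, where the atom `a` is
sent to the orthogonal of `v a`.  The unit is the pole, which is its own orthogonal because the
pole is a submonoid. -/
def interp : St → Set M
  | .unit => S
  | .pos a => orth S (v a)
  | .neg a => orth S (orth S (v a))
  | .par P Q => parr S (interp P) (interp Q)
  | .cop P Q => tensor S (interp P) (interp Q)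

theorem orth_orth_interp (P : St) : orth S (orth S (interp S v P)) = interp S v P := by
  cases P with
  | unit => rw [interp, orth_pole, orth_pole]
  | _ => exact orth_orth_orth _

theorem interp_negS (P : St) : interp S v P.negS = orth S (interp S v P) := by
  induction P with
  | unit => exact orth_pole.symm
  | pos a => rfl
  | neg a => exact (orth_orth_orth _).symm
  | par P Q ihP ihQ => simp only [St.negS, interp, ihP, ihQ, tensor, parr]
  | cop P Q ihP ihQ =>
    simp only [St.negS, interp, ihP, ihQ, parr, orth_orth_interp, orth_tensor]

theorem interp_congr {P Q : St} (h : Equiv P Q) : interp S v P = interp S v Q := by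
  induction h with
  | refl => rfl
  | symm _ ih => exact ih.symm
  | trans _ _ ih ih' => exact ih.trans ih'
  | parComm P Q => exact parr_comm _ _
  | copComm P Q => exact tensor_comm _ _
  | parAssoc P Q R => exact parr_assoc _ _ _
  | copAssoc P Q R => exact tensor_assoc _ _ _
  | parUnit P => rw [interp, interp, parr, orth_pole, orth_add_pole, orth_orth_interp]
  | copUnit P => rw [interp, interp, tensor, orth_add_pole, orth_orth_interp]
  | parCongr _ _ ih ih' => rw [interp, interp, ih, ih']
  | copCongr _ _ ih ih' => rw [interp, interp, ih, ih']

theorem interp_fill_mono {P Q : St} (h : interp S v P ⊆ interp S v Q) :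
    ∀ C : Ctx, interp S v (C.fill P) ⊆ interp S v (C.fill Q)
  | .hole => h
  | .parL C _ => parr_mono (interp_fill_mono h C) subset_rfl
  | .parR _ C => parr_mono subset_rfl (interp_fill_mono h C)
  | .copL C _ => tensor_mono (interp_fill_mono h C) subset_rfl
  | .copR _ C => tensor_mono subset_rfl (interp_fill_mono h C)

theorem interp_subset_of_step {P Q : St} (h : Step LBVRules P Q) :
    interp S v P ⊆ interp S v Q := by
  obtain ⟨r, hr, C, P', Q', hPQ', eP, eQ⟩ := h
  rw [interp_congr S v eP, ← interp_congr S v eQ]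
  apply interp_fill_mono
  cases hPQ' with
  | aiDown A _ =>
    rw [interp, interp, interp_negS]
    exact pole_subset_parr_orth _
  | aiUp A _ => simp [LBVRules] at hr
  | s P Q R => exact tensor_parr_subset _ _ _

theorem interp_subset_of_derivLBV {P Q : St} (h : DerivLBV P Q) :
    interp S v P ⊆ interp S v Q := by
  unfold DerivLBV at h
  induction h with
  | eqv e => exact (interp_congr S v e).subset
  | step s _ ih => exact (interp_subset_of_step S v s).trans ih

end Interpretation

/-! ### The cut-free sequent calculus -/

/-- Derivability in the cut-free one-sided sequent calculus for multiplicative linear logic with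
mix, the empty sequent and a single self-dual unit; a sequent is a finite multiset of
structures. -/
inductive SeqDerivable : Multiset St → Prop where
  | nil : SeqDerivable 0
  | ax (a : ℕ) : SeqDerivable {.pos a, .neg a}
  | unit {Γ : Multiset St} : SeqDerivable Γ → SeqDerivable (.unit ::ₘ Γ)
  | par {A B : St} {Γ : Multiset St} :
      SeqDerivable (A ::ₘ B ::ₘ Γ) → SeqDerivable (.par A B ::ₘ Γ)
  | cop {A B : St} {Γ Δ : Multiset St} :
      SeqDerivable (A ::ₘ Γ) → SeqDerivable (B ::ₘ Δ) → SeqDerivable (.cop A B ::ₘ (Γ + Δ))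
  | mix {Γ Δ : Multiset St} : SeqDerivable Γ → SeqDerivable Δ → SeqDerivable (Γ + Δ)

/-- The pole of the phase space of sequents. -/
def seqPole : AddSubmonoid (Multiset St) where
  carrier := {Γ | SeqDerivable Γ}
  zero_mem' := .nil
  add_mem' := .mix

/-- The interpretation of a structure in the phase space of sequents: the atom `a` denotes the
contexts `Γ` for which `Γ, a` is derivable. -/
def seqInterp : St → Set (Multiset St) := interp seqPole fun a => {{.pos a}}

/-- Okada's lemma. -/
theorem singleton_mem_orth_seqInterp (P : St) :
    {P} ∈ orth (seqPole : Set (Multiset St)) (seqInterp P) := by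
  induction P with
  | unit => exact fun Γ hΓ => SeqDerivable.unit hΓ
  | pos a => exact subset_orth_orth _ rfl
  | neg a =>
    rw [seqInterp, interp, orth_orth_orth]
    rintro _ rfl
    rw [add_comm]
    exact .ax a
  | par P Q ihP ihQ =>
    intro Γ hΓ
    refine SeqDerivable.par ?_
    rw [← Multiset.singleton_add, ← Multiset.singleton_add, ← add_assoc, add_comm]
    exact mem_orth_add.1 hΓ _ ihP _ ihQ
  | cop P Q ihP ihQ =>
    rw [seqInterp, interp, tensor, orth_orth_orth, mem_orth_add]
    exact fun Γ hΓ Δ hΔ => SeqDerivable.cop (ihP Γ hΓ) (ihQ Δ hΔ)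

theorem SeqDerivable.of_proofLBV_par {P R : St} (h : ProofLBV (.par P R)) :
    SeqDerivable {P, R} := by
  have zero_mem : 0 ∈ seqInterp (.par P R) :=
    interp_subset_of_derivLBV _ _ h seqPole.zero_mem
  have pair_mem : 0 + ({P} + {R}) ∈ seqPole :=
    mem_orth_add.1 zero_mem _ (singleton_mem_orth_seqInterp P) _ (singleton_mem_orth_seqInterp R)
  rwa [zero_add] at pair_mem

/-- The class of the par of all members of a sequent. -/
def parSum (Γ : Multiset St) : StClass := (Γ.map fun P => ⟦P⟧).sum

theorem parSum_zero : parSum 0 = 0 := rfl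

theorem parSum_cons (P : St) (Γ : Multiset St) : parSum (P ::ₘ Γ) = ⟦P⟧ + parSum Γ := by
  simp [parSum]

theorem parSum_singleton (P : St) : parSum {P} = ⟦P⟧ := by simp [parSum]

theorem parSum_add (Γ Δ : Multiset St) : parSum (Γ + Δ) = parSum Γ + parSum Δ := by
  simp [parSum]

theorem SeqDerivable.zero_le_parSum {Γ : Multiset St} (h : SeqDerivable Γ) : 0 ≤ parSum Γ := by
  induction h with
  | nil => exact parSum_zero.ge
  | ax a =>
    rw [Multiset.insert_eq_cons, parSum_cons, parSum_singleton]
    exact zero_le_pos_add_neg a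
  | unit _ ih => rwa [parSum_cons, mk_unit, zero_add]
  | par _ ih => rwa [parSum_cons, parSum_cons, ← add_assoc, ← mk_par, ← parSum_cons] at ih
  | cop _ _ ihA ihB =>
    rw [parSum_cons] at ihA ihB
    rw [parSum_cons, parSum_add, mk_cop]
    exact ihA.trans (add_le_mul_add_of_nonneg ihB _ _)
  | mix _ _ ihΓ ihΔ =>
    rw [parSum_add]
    exact add_nonneg ihΓ ihΔ

/-! ### Splitting -/

/-- The context `r` splits into parts that prove `p` and `q` respectively. -/
def Splits (p q r : StClass) : Prop :=
  ∃ s₁ s₂ : StClass, s₁ + s₂ ≤ r ∧ 0 ≤ p + s₁ ∧ 0 ≤ q + s₂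

theorem Splits.mono {p q r r' : StClass} (h : Splits p q r) (hr : r ≤ r') : Splits p q r' := by
  obtain ⟨s₁, s₂, hs, hp, hq⟩ := h
  exact ⟨s₁, s₂, hs.trans hr, hp, hq⟩

theorem exists_eq_cons_of_add_eq_cons {α : Type*} {Γ Δ Ξ : Multiset α} {x : α}
    (h : Γ + Δ = x ::ₘ Ξ) :
    (∃ Γ', Γ = x ::ₘ Γ' ∧ Ξ = Γ' + Δ) ∨ ∃ Δ', Δ = x ::ₘ Δ' ∧ Ξ = Γ + Δ' := by
  have hx : x ∈ Γ + Δ := h ▸ Multiset.mem_cons_self x Ξ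
  rcases Multiset.mem_add.1 hx with hx | hx
  · obtain ⟨Γ', rfl⟩ := Multiset.exists_cons_of_mem hx
    rw [Multiset.cons_add, Multiset.cons_inj_right] at h
    exact .inl ⟨Γ', rfl, h.symm⟩
  · obtain ⟨Δ', rfl⟩ := Multiset.exists_cons_of_mem hx
    rw [Multiset.add_cons, Multiset.cons_inj_right] at h
    exact .inr ⟨Δ', rfl, h.symm⟩

/-- Splitting of every occurrence of `(P,Q)` in the sequent `Θ`: the rest of the sequent splits
into parts that prove `P` and `Q`. -/
def SplitsCop (P Q : St) (Θ : Multiset St) : Prop :=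
  ∀ Γ : Multiset St, Θ = .cop P Q ::ₘ Γ → Splits ⟦P⟧ ⟦Q⟧ (parSum Γ)

namespace SplitsCop

variable {P Q A B : St} {Γ Γ₁ Γ₂ : Multiset St}

theorem of_notMem (h : .cop P Q ∉ Γ) : SplitsCop P Q Γ := by
  rintro Δ rfl
  exact (h (Multiset.mem_cons_self _ _)).elim

theorem unit (h : SplitsCop P Q Γ) : SplitsCop P Q (.unit ::ₘ Γ) := by
  intro Δ hΔ
  obtain ⟨⟨⟩, -⟩ | ⟨-, Ξ, rfl, rfl⟩ := Multiset.cons_eq_cons.1 hΔ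
  rw [parSum_cons, mk_unit, zero_add]
  exact h Ξ rfl

theorem par (h : SplitsCop P Q (A ::ₘ B ::ₘ Γ)) : SplitsCop P Q (.par A B ::ₘ Γ) := by
  intro Δ hΔ
  obtain ⟨⟨⟩, -⟩ | ⟨-, Ξ, rfl, rfl⟩ := Multiset.cons_eq_cons.1 hΔ
  rw [parSum_cons, mk_par, add_assoc, ← parSum_cons, ← parSum_cons]
  exact h _ (by rw [Multiset.cons_swap B, Multiset.cons_swap A])

theorem cop (hA : SplitsCop P Q (A ::ₘ Γ₁)) (hB : SplitsCop P Q (B ::ₘ Γ₂))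
    (nonneg_A : 0 ≤ ⟦A⟧ + parSum Γ₁) (nonneg_B : 0 ≤ ⟦B⟧ + parSum Γ₂) :
    SplitsCop P Q (.cop A B ::ₘ (Γ₁ + Γ₂)) := by
  intro Δ hΔ
  obtain ⟨⟨⟩, rfl⟩ | ⟨-, Ξ, hΞ, rfl⟩ := Multiset.cons_eq_cons.1 hΔ
  · exact ⟨_, _, (parSum_add Γ₁ Γ₂).ge, nonneg_A, nonneg_B⟩
  rw [parSum_cons, mk_cop]
  obtain ⟨Θ, rfl, rfl⟩ | ⟨Θ, rfl, rfl⟩ := exists_eq_cons_of_add_eq_cons hΞ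
  · refine (hA (A ::ₘ Θ) (Multiset.cons_swap _ _ _)).mono ?_
    rw [parSum_cons, parSum_add]
    exact add_le_mul_add_of_nonneg nonneg_B _ _
  · refine (hB (B ::ₘ Θ) (Multiset.cons_swap _ _ _)).mono ?_
    rw [parSum_cons, parSum_add, mul_comm, add_comm (parSum Γ₁)]
    exact add_le_mul_add_of_nonneg nonneg_A _ _

theorem mix (h₁ : SplitsCop P Q Γ₁) (h₂ : SplitsCop P Q Γ₂)
    (nonneg₁ : 0 ≤ parSum Γ₁) (nonneg₂ : 0 ≤ parSum Γ₂) : SplitsCop P Q (Γ₁ + Γ₂) := by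
  intro Δ hΔ
  obtain ⟨Θ, rfl, rfl⟩ | ⟨Θ, rfl, rfl⟩ := exists_eq_cons_of_add_eq_cons hΔ
  · refine (h₁ Θ rfl).mono ?_
    rw [parSum_add]
    exact le_add_of_nonneg_right nonneg₂
  · refine (h₂ Θ rfl).mono ?_
    rw [parSum_add]
    exact le_add_of_nonneg_left nonneg₁

end SplitsCop

theorem SeqDerivable.splitsCop {Θ : Multiset St} (h : SeqDerivable Θ) (P Q : St) :
    SplitsCop P Q Θ := by
  induction h with
  | nil => exact .of_notMem (Multiset.notMem_zero _)
  | ax a => exact .of_notMem (by simp)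
  | unit _ ih => exact ih.unit
  | par _ ih => exact ih.par
  | @cop A B Γ Δ hA hB ihA ihB =>
    exact ihA.cop ihB (parSum_cons A Γ ▸ hA.zero_le_parSum) (parSum_cons B Δ ▸ hB.zero_le_parSum)
  | mix hΓ hΔ ihΓ ihΔ => exact ihΓ.mix ihΔ hΓ.zero_le_parSum hΔ.zero_le_parSum

theorem shallow_splitting {p q r : StClass} (h : 0 ≤ p * q + r) : Splits p q r := by
  induction p, q, r using Quotient.inductionOn₃ with
  | h P Q R =>
    have seqDerivable : SeqDerivable {.cop P Q, R} := .of_proofLBV_par (mk_le_mk.1 h)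
    simpa only [parSum_singleton] using seqDerivable.splitsCop P Q {R} rfl

/-- The context `K{ }`, given by the class of its fillings, can be reduced at `P`: whenever
`[K{P}, t]` is provable, there is a killer `r` of `P` such that `[X, r]` entails `[K{X}, t]` for
all `X`.  The side structure `t` makes the notion inductive in `K`. -/
def ReducibleAt (P : St) (K : St → StClass) : Prop :=
  ∀ t : StClass, 0 ≤ K P + t → ∃ r : StClass, 0 ≤ ⟦P⟧ + r ∧ ∀ X : St, ⟦X⟧ + r ≤ K X + t

theorem ReducibleAt.add_right {P : St} {K : St → StClass} (hK : ReducibleAt P K) (q : StClass) :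
    ReducibleAt P fun X => K X + q := fun t h => by
  simp only [add_assoc] at h ⊢
  exact hK (q + t) h

theorem ReducibleAt.mul_right {P : St} {K : St → StClass} (hK : ReducibleAt P K) (q : StClass) :
    ReducibleAt P fun X => K X * q := fun t h => by
  obtain ⟨t₁, t₂, ht, hP, hq⟩ := shallow_splitting h
  obtain ⟨r, hr, hX⟩ := hK t₁ hP
  refine ⟨r, hr, fun X => ?_⟩
  calc
    ⟦X⟧ + r ≤ K X + t₁ := hX X
    _ ≤ K X * q + (t₁ + t₂) := add_le_mul_add_of_nonneg hq _ _
    _ ≤ K X * q + t := by gcongr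

theorem Ctx.reducibleAt (P : St) (C : Ctx) : ReducibleAt P fun X => ⟦C.fill X⟧ := by
  induction C with
  | hole => exact fun t h => ⟨t, h, fun X => le_rfl⟩
  | parL C T ih => exact ih.add_right ⟦T⟧
  | parR T C ih => simpa only [Ctx.fill, mk_par, add_comm ⟦T⟧] using ih.add_right ⟦T⟧
  | copL C T ih => exact ih.mul_right ⟦T⟧
  | copR T C ih => simpa only [Ctx.fill, mk_cop, mul_comm ⟦T⟧] using ih.mul_right ⟦T⟧

theorem context_reduction {P : St} {C : Ctx} (h : ProofLBV (C.fill P)) :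
    ∃ r : StClass, 0 ≤ ⟦P⟧ + r ∧ ∀ X : St, ⟦X⟧ + r ≤ ⟦C.fill X⟧ := by
  simpa only [add_zero] using C.reducibleAt P 0 (by rwa [add_zero])

/-- Splitting for LBV.
For all structures `P`, `Q` and every context `C{ }`, if `C(P,Q)` is
provable in LBV, then there exist structures `S₁`, `S₂` such that (a) for
every structure `X` there is a derivation in LBV from `[X,S₁,S₂]` to `C{X}`,
and (b) `[P,S₁]` and `[Q,S₂]` are both provable in LBV. -/
theorem splitting (P Q : St) (C : Ctx)
    (h : ProofLBV (C.fill (.cop P Q))) :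
    ∃ S₁ S₂ : St,
      (∀ X : St, DerivLBV (.par X (.par S₁ S₂)) (C.fill X)) ∧
      ProofLBV (.par P S₁) ∧ ProofLBV (.par Q S₂) := by
  obtain ⟨r, hr, hC⟩ := context_reduction h
  rw [mk_cop] at hr
  obtain ⟨⟨S₁⟩, ⟨S₂⟩, hS, hP, hQ⟩ := shallow_splitting hr
  exact ⟨S₁, S₂, fun X => mk_le_mk.1 ((add_le_add_right hS ⟦X⟧).trans (hC X)), hP, hQ⟩

end LBV
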